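/- For all μ, ν ∈ P_2(ℝ^d), the Sliced-Wasserstein distance is dominated by the Wasserstein distance with constant c_d = 1/√d: SW_2²(μ, ν) ≤ (1/d) · W_2²(μ, ν). -/

import Mathlib

open MeasureTheory ENNReal Metric Filter
open scoped RealInnerProductSpace NNReal

noncomputable section

/-- `ℝ^d` as a Euclidean space. -/
abbrev Ed (d : ℕ) : Type := EuclideanSpace ℝ (Fin d)

/-- `π` is a coupling of `μ` and `ν`. -/
def IsCoupling {E : Type*} [MeasurableSpace E] (π : Measure (E × E)) (μ ν : Measure E) : Prop :=
  π.map Prod.fst = μ ∧ π.map Prod.snd = ν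

/-- Squared 2-Wasserstein distance. -/
def W2sq {E : Type*} [MeasurableSpace E] [NormedAddCommGroup E] (μ ν : Measure E) : ℝ≥0∞ :=
  ⨅ (π : Measure (E × E)) (_ : IsCoupling π μ ν), ∫⁻ p, (‖p.1 - p.2‖₊ : ℝ≥0∞) ^ 2 ∂π

/-- The uniform probability measure on the unit sphere `S^{d-1}`. -/
def unifSphere (d : ℕ) : Measure (sphere (0 : Ed d) 1) :=
  ((volume : Measure (Ed d)).toSphere Set.univ)⁻¹ • (volume : Measure (Ed d)).toSphere

/-- Projection `P^θ(x) = ⟨x, θ⟩`. -/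
def proj {d : ℕ} (θ : Ed d) (x : Ed d) : ℝ := ⟪x, θ⟫

/-- Squared Sliced-Wasserstein distance. -/
def SW2sq {d : ℕ} (μ ν : Measure (Ed d)) : ℝ≥0∞ :=
  ∫⁻ θ : sphere (0 : Ed d) 1,
    W2sq (μ.map (proj (θ : Ed d))) (ν.map (proj (θ : Ed d))) ∂(unifSphere d)

/-- Sliced-Wasserstein distance. -/
def SW2 {d : ℕ} (μ ν : Measure (Ed d)) : ℝ := Real.sqrt (SW2sq μ ν).toReal

/-- Finite second moment. -/
def FiniteSecondMoment {d : ℕ} (μ : Measure (Ed d)) : Prop :=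
  ∫⁻ x, (‖x‖₊ : ℝ≥0∞) ^ 2 ∂μ < ∞

/-- `μ ∈ P_2(K)`: probability measure supported in `K` with finite second moment. -/
def MemP2 {d : ℕ} (K : Set (Ed d)) (μ : Measure (Ed d)) : Prop :=
  IsProbabilityMeasure μ ∧ μ Kᶜ = 0 ∧ FiniteSecondMoment μ

/-! For a unit vector `θ`, a coupling `π` of `μ` and `ν` projects to a coupling of their marginals
along `θ`, whose cost is `∫ ⟪x - y, θ⟫² dπ(x, y)`. Averaging over `θ` and exchanging the integrals
reduces the claim to `∫ ⟪v, θ⟫² dλ(θ) = ‖v‖² / d`. By rotation invariance of `λ` the left-hand side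
depends on `v` only through `‖v‖`, and its values at the vectors `‖v‖ • b i` of a rescaled
orthonormal basis `b` sum to `‖v‖²`. -/

open scoped Pointwise

section Tonelli

variable {α β : Type*} [MeasurableSpace α] [MeasurableSpace β] {μ : Measure α} {ν : Measure β}

lemma sFinite_restrict_support_of_lintegral_ne_top {g : α → ℝ≥0∞} (hg : Measurable g)
    (hg_fin : ∫⁻ x, g x ∂μ ≠ ∞) : SFinite (μ.restrict g.support) := by
  have hsupp : MeasurableSet g.support := measurableSet_support hg
  have hg_pos : ∀ᵐ x ∂μ.restrict g.support, g x ≠ 0 := ae_restrict_mem hsupp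
  have hg_lt_top : ∀ᵐ x ∂μ.restrict g.support, g x ≠ ∞ :=
    ae_restrict_of_ae ((ae_lt_top hg hg_fin).mono fun _ hx ↦ hx.ne)
  have : IsFiniteMeasure ((μ.restrict g.support).withDensity g) :=
    isFiniteMeasure_withDensity (ne_top_of_le_ne_top hg_fin (setLIntegral_le_lintegral _ _))
  rw [← withDensity_inv_same hg hg_pos hg_lt_top]
  infer_instance

lemma lintegral_lintegral_swap_of_lintegral_ne_top [SFinite ν] {f : α → β → ℝ≥0∞} {g : α → ℝ≥0∞}
    (hf : Measurable (Function.uncurry f)) (hg : Measurable g) (hg_fin : ∫⁻ x, g x ∂μ ≠ ∞)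
    (hfg : ∀ x y, g x = 0 → f x y = 0) :
    ∫⁻ x, ∫⁻ y, f x y ∂ν ∂μ = ∫⁻ y, ∫⁻ x, f x y ∂μ ∂ν := by
  have : SFinite (μ.restrict g.support) := sFinite_restrict_support_of_lintegral_ne_top hg hg_fin
  have hsupp_section (y : β) : (f · y).support ⊆ g.support :=
    fun x hx hgx ↦ hx (hfg x y hgx)
  have hsupp_lintegral : (fun x ↦ ∫⁻ y, f x y ∂ν).support ⊆ g.support :=
    fun x hx hgx ↦ hx (by simp [hfg x _ hgx])
  calc ∫⁻ x, ∫⁻ y, f x y ∂ν ∂μ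
    _ = ∫⁻ x in g.support, ∫⁻ y, f x y ∂ν ∂μ :=
      (setLIntegral_eq_of_support_subset hsupp_lintegral).symm
    _ = ∫⁻ y, ∫⁻ x in g.support, f x y ∂μ ∂ν := lintegral_lintegral_swap hf.aemeasurable
    _ = ∫⁻ y, ∫⁻ x, f x y ∂μ ∂ν :=
      lintegral_congr fun y ↦ setLIntegral_eq_of_support_subset (hsupp_section y)

end Tonelli

section Coupling

variable {E F : Type*} [MeasurableSpace E] [MeasurableSpace F] {μ ν : Measure E}
  {π : Measure (E × E)} {f : E → F}

lemma IsCoupling.map (hπ : IsCoupling π μ ν) (hf : Measurable f) :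
    IsCoupling (π.map (Prod.map f f)) (μ.map f) (ν.map f) := by
  have hff : Measurable (Prod.map f f) := hf.prodMap hf
  constructor
  · rw [← hπ.1, Measure.map_map measurable_fst hff, Measure.map_map hf measurable_fst,
      Prod.map_fst']
  · rw [← hπ.2, Measure.map_map measurable_snd hff, Measure.map_map hf measurable_snd,
      Prod.map_snd']

lemma IsCoupling.w2sq_map_le [NormedAddCommGroup F] (hπ : IsCoupling π μ ν) (hf : Measurable f) :
    W2sq (μ.map f) (ν.map f) ≤ ∫⁻ p, ‖f p.1 - f p.2‖ₑ ^ 2 ∂π :=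
  (iInf₂_le (π.map (Prod.map f f)) (hπ.map hf)).trans (lintegral_map_le _ _)

end Coupling

section LinearIsometryInvariance

lemma preimage_set_smul {R E F : Type*} [Semiring R] [AddCommMonoid E] [AddCommMonoid F]
    [Module R E] [Module R F] (e : E ≃ₗ[R] F) (I : Set R) (s : Set F) :
    e ⁻¹' (I • s) = I • e ⁻¹' s := by
  simp only [← LinearEquiv.image_symm_eq_preimage]
  exact Set.image_image2_distrib_right e.symm.map_smul

variable {E : Type*} [NormedAddCommGroup E] [NormedSpace ℝ E] [MeasurableSpace E]

/-- Invariance of a measure under all linear isometric automorphisms of a real normed space; for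
Euclidean space these are the rotations and reflections. For a measure on the unit sphere the
notion is applied to its pushforward to the ambient space. -/
def IsLinearIsometryInvariant (σ : Measure E) : Prop :=
  ∀ e : E ≃ₗᵢ[ℝ] E, σ.map e = σ

lemma IsLinearIsometryInvariant.smul {σ : Measure E} (hσ : IsLinearIsometryInvariant σ)
    (c : ℝ≥0∞) : IsLinearIsometryInvariant (c • σ) :=
  fun e ↦ by rw [Measure.map_smul, hσ e]

variable [BorelSpace E]

lemma map_coe_toSphere_apply (μ : Measure E) {s : Set E} (hs : MeasurableSet s) :
    μ.toSphere.map (↑) s = Module.finrank ℝ E * μ (Set.Ioo (0 : ℝ) 1 • (sphere 0 1 ∩ s)) := by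
  rw [Measure.map_apply measurable_subtype_coe hs,
    μ.toSphere_apply' (measurable_subtype_coe hs), Subtype.image_preimage_coe]

lemma IsLinearIsometryInvariant.map_coe_toSphere {μ : Measure E}
    (hμ : IsLinearIsometryInvariant μ) :
    IsLinearIsometryInvariant (μ.toSphere.map ((↑) : sphere (0 : E) 1 → E)) := by
  refine fun e ↦ Measure.ext fun s hs ↦ ?_
  have he : MeasurableEmbedding e := e.toHomeomorph.measurableEmbedding
  have hcone : Set.Ioo (0 : ℝ) 1 • (sphere 0 1 ∩ e ⁻¹' s)
      = e ⁻¹' (Set.Ioo (0 : ℝ) 1 • (sphere 0 1 ∩ s)) := by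
    have h := preimage_set_smul e.toLinearEquiv (Set.Ioo (0 : ℝ) 1) (sphere 0 1 ∩ s)
    simpa [Set.preimage_inter] using h.symm
  rw [he.map_apply, map_coe_toSphere_apply μ (he.measurable hs), map_coe_toSphere_apply μ hs,
    hcone, ← he.map_apply, hμ e]

end LinearIsometryInvariance

section SecondMoment

variable {E : Type*} [NormedAddCommGroup E] [InnerProductSpace ℝ E]

lemma sum_enorm_inner_sq {ι : Type*} [Fintype ι] (b : OrthonormalBasis ι ℝ E) (x : E) :
    ∑ i, ‖⟪b i, x⟫‖ₑ ^ 2 = ‖x‖ₑ ^ 2 := by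
  have h : ∑ i, ‖⟪b i, x⟫‖₊ ^ 2 = ‖x‖₊ ^ 2 := NNReal.eq (by simpa using b.sum_sq_norm_inner_right x)
  simpa only [enorm_eq_nnnorm] using mod_cast h

namespace IsLinearIsometryInvariant

variable [MeasurableSpace E] [BorelSpace E] {σ : Measure E}

lemma map_inner_eq_of_norm_eq (hσ : IsLinearIsometryInvariant σ) {v w : E} (hvw : ‖v‖ = ‖w‖) :
    σ.map (⟪v, ·⟫) = σ.map (⟪w, ·⟫) := by
  obtain ⟨e, rfl⟩ : ∃ e : E ≃ₗᵢ[ℝ] E, e v = w := ⟨_, Submodule.reflection_sub hvw⟩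
  have hinner : Measurable (⟪e v, ·⟫) := (innerSL ℝ (e v)).continuous.measurable
  calc σ.map (⟪v, ·⟫)
    _ = σ.map ((⟪e v, ·⟫) ∘ e) := by simp only [Function.comp_def, e.inner_map_map]
    _ = (σ.map e).map (⟪e v, ·⟫) := (Measure.map_map hinner e.continuous.measurable).symm
    _ = σ.map (⟪e v, ·⟫) := by rw [hσ e]

lemma lintegral_enorm_inner_sq_eq_of_norm_eq (hσ : IsLinearIsometryInvariant σ) {v w : E}
    (hvw : ‖v‖ = ‖w‖) : ∫⁻ x, ‖⟪v, x⟫‖ₑ ^ 2 ∂σ = ∫⁻ x, ‖⟪w, x⟫‖ₑ ^ 2 ∂σ := by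
  have hinner (u : E) : Measurable (⟪u, ·⟫) := (innerSL ℝ u).continuous.measurable
  have hmap (u : E) : ∫⁻ x, ‖⟪u, x⟫‖ₑ ^ 2 ∂σ = ∫⁻ t, ‖t‖ₑ ^ 2 ∂σ.map (⟪u, ·⟫) :=
    (lintegral_map (f := fun t : ℝ ↦ ‖t‖ₑ ^ 2) (by fun_prop) (hinner u)).symm
  rw [hmap v, hmap w, hσ.map_inner_eq_of_norm_eq hvw]

lemma finrank_mul_lintegral_enorm_inner_sq [FiniteDimensional ℝ E]
    (hσ : IsLinearIsometryInvariant σ) (v : E) :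
    Module.finrank ℝ E * ∫⁻ x, ‖⟪v, x⟫‖ₑ ^ 2 ∂σ = ‖v‖ₑ ^ 2 * ∫⁻ x, ‖x‖ₑ ^ 2 ∂σ := by
  let b := stdOrthonormalBasis ℝ E
  have hnorm (i) : ‖v‖ = ‖‖v‖ • b i‖ := by simp [norm_smul]
  calc Module.finrank ℝ E * ∫⁻ x, ‖⟪v, x⟫‖ₑ ^ 2 ∂σ
    _ = ∑ i, ∫⁻ x, ‖⟪‖v‖ • b i, x⟫‖ₑ ^ 2 ∂σ := by
      simp [← hσ.lintegral_enorm_inner_sq_eq_of_norm_eq (hnorm _)]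
    _ = ∫⁻ x, ∑ i, ‖⟪‖v‖ • b i, x⟫‖ₑ ^ 2 ∂σ := (lintegral_finsetSum _ fun i _ ↦ by fun_prop).symm
    _ = ∫⁻ x, ‖v‖ₑ ^ 2 * ‖x‖ₑ ^ 2 ∂σ := by
      simp only [real_inner_smul_left, enorm_mul, enorm_norm, mul_pow, ← Finset.mul_sum,
        sum_enorm_inner_sq]
    _ = ‖v‖ₑ ^ 2 * ∫⁻ x, ‖x‖ₑ ^ 2 ∂σ := lintegral_const_mul _ (by fun_prop)

end IsLinearIsometryInvariant

end SecondMoment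

section UniformSphere

variable {d : ℕ}

lemma isLinearIsometryInvariant_map_coe_unifSphere (d : ℕ) :
    IsLinearIsometryInvariant ((unifSphere d).map ((↑) : sphere (0 : Ed d) 1 → Ed d)) := by
  have hvol : IsLinearIsometryInvariant (volume : Measure (Ed d)) :=
    fun e ↦ e.measurePreserving.map_eq
  rw [unifSphere, Measure.map_smul]
  exact hvol.map_coe_toSphere.smul _

instance instIsProbabilityMeasureUnifSphere [NeZero d] : IsProbabilityMeasure (unifSphere d) := by
  have : NeZero (volume : Measure (Ed d)).toSphere := ⟨Measure.toSphere_ne_zero _⟩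
  unfold unifSphere
  infer_instance

lemma lintegral_enorm_inner_sq_unifSphere [NeZero d] (v : Ed d) :
    ∫⁻ θ : sphere (0 : Ed d) 1, ‖⟪v, (θ : Ed d)⟫‖ₑ ^ 2 ∂unifSphere d = ‖v‖ₑ ^ 2 / d := by
  have h := (isLinearIsometryInvariant_map_coe_unifSphere d).finrank_mul_lintegral_enorm_inner_sq v
  rw [lintegral_map (by fun_prop) measurable_subtype_coe,
    lintegral_map (by fun_prop) measurable_subtype_coe] at h
  rw [ENNReal.eq_div_iff (NeZero.ne _) (natCast_ne_top d)]
  have hnorm (θ : sphere (0 : Ed d) 1) : ‖(θ : Ed d)‖ₑ = 1 := by simp [← ofReal_norm]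
  simpa [hnorm, mul_comm] using h

lemma IsCoupling.sw2sq_le [NeZero d] {μ ν : Measure (Ed d)} {π : Measure (Ed d × Ed d)}
    (hπ : IsCoupling π μ ν) : SW2sq μ ν ≤ (∫⁻ p, ‖p.1 - p.2‖ₑ ^ 2 ∂π) / d := by
  rcases eq_or_ne (∫⁻ p, ‖p.1 - p.2‖ₑ ^ 2 ∂π) ∞ with hcost | hcost
  · simp [hcost, top_div_of_ne_top]
  calc SW2sq μ ν
    _ ≤ ∫⁻ θ : sphere (0 : Ed d) 1, ∫⁻ p, ‖⟪p.1 - p.2, (θ : Ed d)⟫‖ₑ ^ 2 ∂π ∂unifSphere d := by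
      refine lintegral_mono fun θ ↦ ?_
      have hproj : Measurable (proj (θ : Ed d)) := by unfold proj; fun_prop
      simpa only [proj, inner_sub_left] using hπ.w2sq_map_le hproj
    _ = ∫⁻ p, ∫⁻ θ : sphere (0 : Ed d) 1, ‖⟪p.1 - p.2, (θ : Ed d)⟫‖ₑ ^ 2 ∂unifSphere d ∂π := by
      -- `π` may fail to be s-finite, but finiteness of its cost makes it so off the diagonal,
      -- and the integrand vanishes on the diagonal.
      refine (lintegral_lintegral_swap_of_lintegral_ne_top ?_ (by fun_prop) hcost ?_).symm
      · unfold Function.uncurry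
        fun_prop
      · intro p θ hp
        have hsub : p.1 - p.2 = 0 := by simpa using hp
        simp [hsub]
    _ = ∫⁻ p, ‖p.1 - p.2‖ₑ ^ 2 / d ∂π := by simp only [lintegral_enorm_inner_sq_unifSphere]
    _ = (∫⁻ p, ‖p.1 - p.2‖ₑ ^ 2 ∂π) / d := by
      simp only [div_eq_mul_inv]
      exact lintegral_mul_const _ (by fun_prop)

end UniformSphere

theorem sw2sq_le_w2sq_div_dim_general (d : ℕ) (μ ν : Measure (Ed d)) :
    SW2sq μ ν ≤ W2sq μ ν / d := by
  rcases eq_or_ne d 0 with rfl | hd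
  · simp [SW2sq, lintegral_of_isEmpty]
  · have : NeZero d := ⟨hd⟩
    simp only [W2sq, iInf_div_of_ne (NeZero.ne (d : ℝ≥0∞)) (natCast_ne_top d)]
    exact le_iInf₂ fun π hπ ↦ hπ.sw2sq_le

/-- For all μ, ν ∈ P_2(ℝ^d), SW_2²(μ, ν) ≤ W_2²(μ, ν)/d. -/
theorem sw2sq_le_w2sq_div_dim (d : ℕ) (μ ν : Measure (Ed d))
    [IsProbabilityMeasure μ] [IsProbabilityMeasure ν]
    (hμ2 : FiniteSecondMoment μ) (hν2 : FiniteSecondMoment ν) :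
    SW2sq μ ν ≤ W2sq μ ν / d :=
  sw2sq_le_w2sq_div_dim_general d μ ν
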